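/- arXiv:1609.07531 — 2 statements merged into one kernel-verified Lean document; each statement's English description precedes it below -/
import Mathlib

section
/- Let N be a matching in G that admits a 2-level witness. Then |N| ≥ (2/3)·|M_max|, where M_max is a maximum-size matching in G. -/
/-!
Both matchings are compared one side of the bipartition at a time.

If a clone `x` of `a` is free in `N'`, then `x` lies at level 1 and votes `+1` for any neighbor, so an
edge `(a, b) ∈ E ∖ N` cannot have weight `-2` at any clone of `b`; hence all clones of `b` are at level 1,
and in particular all are matched by `N'`. Only vertices `a` with a free clone can have
`|M(a)| > |N(a)|`, and the edges of `M ∖ N` at such vertices end in vertices `b` all of whose clones are at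
level 1. There are at most `∑ cap(b)` such edges, which is at most the number `n₁` of edges of `N'` at
level 1. Thus `|M| ≤ |N| + n₁` (`card_le_card_add_card_level`).

Exchanging the two sides gives `|M| ≤ |N| + n₀` with `n₀` the number of edges of `N'` at level 0. Since
`n₀ + n₁ = |N|`, adding the two bounds yields `2|M| ≤ 3|N|`. Neither a realization of `M` on the clones nor
an analysis of augmenting paths is needed.
-/

/-!
Many-to-many matchings with two-sided preferences, votes, and popularity,
following "Popular Matchings in the Many-to-Many Setting".
-/

/-- The vote of a vertex with rank function `r` (smaller rank = more preferred)
comparing two options, where `none` stands for `null` (ranked below everything). -/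
def vote {β : Type*} [DecidableEq β] (r : β → ℕ) : Option β → Option β → ℤ
  | none, none => 0
  | some _, none => 1
  | none, some _ => -1
  | some x, some y => if x = y then 0 else if r x < r y then 1 else -1

/-- The common length `k` of the arrays compared in `δ_u(S₀,S₁)`:
after padding the smaller of `S₀, S₁` with nulls and removing common elements. -/
def kOf {β : Type*} [DecidableEq β] (S₀ S₁ : Finset β) : ℕ :=
  max S₀.card S₁.card - (S₀ ∩ S₁).card

/-- `S₀ ∖ S₁`, viewed as an array of `Option`s padded with `none` (null) to length `k`. -/
noncomputable def padded {β : Type*} [DecidableEq β] (S₀ S₁ : Finset β) (k : ℕ) : List (Option β) :=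
  ((S₀ \ S₁).toList.map some) ++ List.replicate (k - (S₀ \ S₁).card) none

/-- `δ_u(S₀,S₁)`: the minimum, over all permutations `σ` of `{1,…,k}`, of
`Σ_i vote_u(S'₀[i], S'₁[σ(i)])`. -/
noncomputable def deltaSet {β : Type*} [DecidableEq β] (r : β → ℕ) (S₀ S₁ : Finset β) : ℤ :=
  Finset.univ.inf' ⟨1, Finset.mem_univ 1⟩ fun σ : Equiv.Perm (Fin (kOf S₀ S₁)) =>
    ∑ i : Fin (kOf S₀ S₁),
      vote r ((padded S₀ S₁ (kOf S₀ S₁)).getD (i : ℕ) none)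
             ((padded S₁ S₀ (kOf S₀ S₁)).getD (σ i : ℕ) none)

/-- A bipartite instance `G = (A ∪ B, E)` with capacities `≥ 1` and strict
preferences of every vertex over its neighbors (given by injective-on-neighbors
rank functions; smaller rank = more preferred). -/
structure PrefInstance (α β : Type*) [Fintype α] [Fintype β] [DecidableEq α] [DecidableEq β] where
  E : Finset (α × β)
  capA : α → ℕ
  capB : β → ℕ
  rankA : α → β → ℕ
  rankB : β → α → ℕ
  capA_pos : ∀ a, 1 ≤ capA a
  capB_pos : ∀ b, 1 ≤ capB b
  rankA_injOn : ∀ a, Set.InjOn (rankA a) {b | (a, b) ∈ E}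
  rankB_injOn : ∀ b, Set.InjOn (rankB b) {a | (a, b) ∈ E}

namespace PrefInstance

variable {α β : Type*} [Fintype α] [Fintype β] [DecidableEq α] [DecidableEq β]

/-- `M(a)`: the set of `B`-vertices matched to `a` in `M`. -/
def rowSet (M : Finset (α × β)) (a : α) : Finset β :=
  Finset.univ.filter fun b => (a, b) ∈ M

/-- `M(b)`: the set of `A`-vertices matched to `b` in `M`. -/
def colSet (M : Finset (α × β)) (b : β) : Finset α :=
  Finset.univ.filter fun a => (a, b) ∈ M

variable (I : PrefInstance α β)

/-- `M` is a matching in `G`: a subset of `E` respecting all capacities. -/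
def IsMatching (M : Finset (α × β)) : Prop :=
  M ⊆ I.E ∧ (∀ a, (rowSet M a).card ≤ I.capA a) ∧ (∀ b, (colSet M b).card ≤ I.capB b)

/-- `Δ_a(M₀,M₁) = δ_a(M₀(a), M₁(a))` for `a ∈ A`. -/
noncomputable def DeltaA (M₀ M₁ : Finset (α × β)) (a : α) : ℤ :=
  deltaSet (I.rankA a) (rowSet M₀ a) (rowSet M₁ a)

/-- `Δ_b(M₀,M₁) = δ_b(M₀(b), M₁(b))` for `b ∈ B`. -/
noncomputable def DeltaB (M₀ M₁ : Finset (α × β)) (b : β) : ℤ :=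
  deltaSet (I.rankB b) (colSet M₀ b) (colSet M₁ b)

/-- `Δ(M₀,M₁) = Σ_{u ∈ A∪B} Δ_u(M₀,M₁)`. -/
noncomputable def Delta (M₀ M₁ : Finset (α × β)) : ℤ :=
  (∑ a, I.DeltaA M₀ M₁ a) + ∑ b, I.DeltaB M₀ M₁ b

/-- `M` is a popular matching: `Δ(M,T) ≥ 0` against every matching `T`. -/
def Popular (M : Finset (α × β)) : Prop :=
  I.IsMatching M ∧ ∀ T, I.IsMatching T → 0 ≤ I.Delta M T

/-- `M` is a weakly popular matching: `Δ(T,M) ≤ 0` for every matching `T`. -/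
def WeaklyPopular (M : Finset (α × β)) : Prop :=
  I.IsMatching M ∧ ∀ T, I.IsMatching T → I.Delta T M ≤ 0

/-- The edge `(a,b) ∈ E ∖ M` blocks `M`. -/
def Blocks (M : Finset (α × β)) (a : α) (b : β) : Prop :=
  (a, b) ∈ I.E ∧ (a, b) ∉ M ∧
  ((rowSet M a).card < I.capA a ∨ ∃ b' ∈ rowSet M a, I.rankA a b < I.rankA a b') ∧
  ((colSet M b).card < I.capB b ∨ ∃ a' ∈ colSet M b, I.rankB b a < I.rankB b a')

/-- `M` is a pairwise-stable matching: no edge blocks it. -/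
def Stable (M : Finset (α × β)) : Prop :=
  I.IsMatching M ∧ ∀ a b, ¬ I.Blocks M a b

end PrefInstance
namespace PrefInstance

variable {α β : Type*} [Fintype α] [Fintype β] [DecidableEq α] [DecidableEq β]
variable (I : PrefInstance α β)

/-- `A'`: the set of clones `a_i`, `1 ≤ i ≤ cap(a)`, of the vertices of `A`. -/
abbrev CloneA := (a : α) × Fin (I.capA a)

/-- `B'`: the set of clones `b_j`, `1 ≤ j ≤ cap(b)`, of the vertices of `B`. -/
abbrev CloneB := (b : β) × Fin (I.capB b)

/-- `N'` is a realization of the matching `N` on the cloned vertex sets: a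
(one-to-one) matching on `A' × B'` whose projection is a bijection onto `N`. -/
def IsRealization (N : Finset (α × β)) (N' : Finset (I.CloneA × I.CloneB)) : Prop :=
  (∀ e ∈ N', ∀ f ∈ N', e.1 = f.1 → e = f) ∧
  (∀ e ∈ N', ∀ f ∈ N', e.2 = f.2 → e = f) ∧
  N'.image (fun e => (e.1.1, e.2.1)) = N ∧
  N'.card = N.card

/-- The partner of `x ∈ A'` in a one-to-one matching `N'` on clones (`none` if unmatched,
i.e. matched to the last resort `ℓ(x)` in `N*`). -/
noncomputable def partnerA (N' : Finset (I.CloneA × I.CloneB)) (x : I.CloneA) :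
    Option I.CloneB :=
  if h : ∃ y, (x, y) ∈ N' then some h.choose else none

/-- The partner of `y ∈ B'` in a one-to-one matching `N'` on clones (`none` if unmatched). -/
noncomputable def partnerB (N' : Finset (I.CloneA × I.CloneB)) (y : I.CloneB) :
    Option I.CloneA :=
  if h : ∃ x, (x, y) ∈ N' then some h.choose else none

/-- `(x, y) ∈ A' × B'` is an edge of the graph `G'_N`: either the underlying pair is an
edge of `E ∖ N` (all clone copies present), or `(x,y)` is the unique copy in `N'` of an
edge of `N`. -/
def GNEdge (N : Finset (α × β)) (N' : Finset (I.CloneA × I.CloneB))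
    (x : I.CloneA) (y : I.CloneB) : Prop :=
  ((x.1, y.1) ∈ I.E ∧ (x.1, y.1) ∉ N) ∨ (x, y) ∈ N'

/-- The weight `wt_N(x,y) = vote_a(b, N*(a_i)) + vote_b(a, N*(b_j))` of an edge of `G'_N`
lying in `A' × B'` (a last-resort partner in `N*` is read as null). -/
noncomputable def wtE (N' : Finset (I.CloneA × I.CloneB))
    (x : I.CloneA) (y : I.CloneB) : ℤ :=
  vote (I.rankA x.1) (some y.1) (Option.map Sigma.fst (I.partnerA N' x)) +
  vote (I.rankB y.1) (some x.1) (Option.map Sigma.fst (I.partnerB N' y))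

/-- A one-to-one matching on the clone sets (each clone is in at most one edge).
Together with the implicit last-resort edges for unmatched clones, this represents
an `(A' ∪ B')`-complete matching in `G'_N`. -/
def IsCloneMatching (T' : Finset (I.CloneA × I.CloneB)) : Prop :=
  (∀ e ∈ T', ∀ f ∈ T', e.1 = f.1 → e = f) ∧ (∀ e ∈ T', ∀ f ∈ T', e.2 = f.2 → e = f)

/-- The weight `wt_N` of the `(A' ∪ B')`-complete matching represented by `T'`:
the sum of the weights of its `A' × B'` edges plus, for every clone left unmatched
in `T'` (hence matched to its last resort), the weight `wt_N(v, ℓ(v))`, which is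
`-1` if `v` is matched in `N'` and `0` otherwise. -/
noncomputable def wtTotal (N' T' : Finset (I.CloneA × I.CloneB)) : ℤ :=
  (∑ e ∈ T', I.wtE N' e.1 e.2) +
  (∑ x : I.CloneA,
    if ∀ y, (x, y) ∉ T' then (if ∃ y, (x, y) ∈ N' then (-1 : ℤ) else 0) else 0) +
  (∑ y : I.CloneB,
    if ∀ x, (x, y) ∉ T' then (if ∃ x, (x, y) ∈ N' then (-1 : ℤ) else 0) else 0)

/-- A 2-level witness for `N` (with realization `N'`): partitions
`A' = A'₀ ∪ A'₁` and `B' = B'₀ ∪ B'₁` (encoded by level functions `lA, lB`, where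
`true` means level 1) such that clones of `A'` unmatched in `N'` are in `A'₁`, clones
of `B'` unmatched in `N'` are in `B'₀`, `N' ⊆ (A'₀ × B'₀) ∪ (A'₁ × B'₁)`, every edge
of `G'_N` in `A'₁ × B'₀` has weight `-2`, and every edge of `G'_N` in
`(A'₀ × B'₀) ∪ (A'₁ × B'₁)` has weight `≤ 0`. -/
def TwoLevelWitness (N : Finset (α × β)) (N' : Finset (I.CloneA × I.CloneB))
    (lA : I.CloneA → Bool) (lB : I.CloneB → Bool) : Prop :=
  (∀ x : I.CloneA, (∀ y, (x, y) ∉ N') → lA x = true) ∧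
  (∀ y : I.CloneB, (∀ x, (x, y) ∉ N') → lB y = false) ∧
  (∀ e ∈ N', lA e.1 = lB e.2) ∧
  (∀ x y, I.GNEdge N N' x y → lA x = true → lB y = false → I.wtE N' x y = -2) ∧
  (∀ x y, I.GNEdge N N' x y → lA x = lB y → I.wtE N' x y ≤ 0)

end PrefInstance
/-- The one-sided bound. The two sides of the bipartition enter only through the endpoint maps `f`, `g`
(and `f'`, `g'` on clones), so that the lemma applies to both sides by exchanging them; `pr` projects
clone edges to edges. The predicate `Q` selects the clones of the right level on the far side: they
are all matched, and they comprise every clone of a vertex joined by an edge of `M ∖ N` to a vertex having a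
free clone. -/
lemma card_le_card_add_card_level {ε ε' α β : Type*} [Fintype α] [Fintype β]
    [DecidableEq ε] [DecidableEq α] [DecidableEq β]
    (cA : α → ℕ) (cB : β → ℕ) (f : ε → α) (g : ε → β)
    (f' : ε' → (a : α) × Fin (cA a)) (g' : ε' → (b : β) × Fin (cB b)) (pr : ε' → ε)
    (M N : Finset ε) (N' : Finset ε')
    (hinj : Set.InjOn pr N') (himg : N'.image pr = N)
    (hf : ∀ e, f (pr e) = (f' e).1)
    (hMA : ∀ a, (M.filter (fun e => f e = a)).card ≤ cA a)
    (hMB : ∀ b, (M.filter (fun e => g e = b)).card ≤ cB b)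
    (Q : (b : β) × Fin (cB b) → Prop) [DecidablePred Q]
    (hQ : ∀ y, Q y → ∃ e ∈ N', g' e = y)
    (H : ∀ x, (∀ e ∈ N', f' e ≠ x) → ∀ e ∈ M, e ∉ N → f e = x.1 → ∀ y, y.1 = g e → Q y) :
    M.card ≤ N.card + (N'.filter (fun e => Q (g' e))).card := by
  classical
  -- a vertex not filled by `N` has a free clone
  have hfree : ∀ a, (N.filter (fun e => f e = a)).card < cA a →
      ∃ i : Fin (cA a), ∀ e ∈ N', f' e ≠ ⟨a, i⟩ := by
    intro a ha
    by_contra! hcon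
    choose e he hfe using hcon
    have : (Finset.univ : Finset (Fin (cA a))).card ≤ (N.filter (fun e => f e = a)).card := by
      refine Finset.card_le_card_of_injOn (fun i => pr (e i)) ?_ ?_
      · intro i _
        simp only [Finset.coe_filter, Set.mem_ofPred_eq]
        refine ⟨himg ▸ Finset.mem_image_of_mem _ (he i), ?_⟩
        rw [hf, hfe]
      · intro i _ j _ hij
        have h1 := hinj (he i) (he j) hij
        have h2 := hfe i
        rw [h1, hfe j] at h2
        simpa using h2.symm
    simp at this
    omega
  let F : α → Prop := fun a => (N.filter (fun e => f e = a)).card < cA a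
  let S : Finset β := Finset.univ.filter (fun b => ∀ j : Fin (cB b), Q ⟨b, j⟩)
  have h1 : M.card ≤ N.card + ((M \ N).filter (fun e => F (f e))).card := by
    rw [Finset.card_eq_sum_card_fiberwise (f := f) (s := M) (t := Finset.univ) (by simp),
      Finset.card_eq_sum_card_fiberwise (f := f) (s := N) (t := Finset.univ) (by simp),
      Finset.card_eq_sum_card_fiberwise (f := f) (s := (M \ N).filter (fun e => F (f e)))
        (t := Finset.univ) (by simp), ← Finset.sum_add_distrib]
    refine Finset.sum_le_sum fun a _ => ?_
    by_cases hF : F a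
    · refine (Finset.card_le_card ?_).trans (Finset.card_union_le _ _)
      intro e he
      simp only [Finset.mem_union, Finset.mem_filter, Finset.mem_sdiff] at he ⊢
      obtain ⟨he, rfl⟩ := he
      tauto
    · have := hMA a
      simp only [F, not_lt] at hF
      omega
  have h2 : ((M \ N).filter (fun e => F (f e))).card ≤ ∑ b ∈ S, cB b := by
    rw [Finset.card_eq_sum_card_fiberwise (f := g) (t := S)]
    · refine Finset.sum_le_sum fun b _ => (Finset.card_le_card ?_).trans (hMB b)
      intro e he
      simp only [Finset.mem_filter, Finset.mem_sdiff] at he ⊢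
      tauto
    · intro e he
      simp only [Finset.coe_filter, Finset.mem_sdiff, Set.mem_ofPred_eq] at he
      obtain ⟨i, hi⟩ := hfree _ he.2
      simp only [S, Finset.coe_filter, Finset.mem_univ, true_and, Set.mem_ofPred_eq]
      exact fun j => H ⟨f e, i⟩ hi e he.1.1 he.1.2 rfl ⟨g e, j⟩ rfl
  have h3 : ∑ b ∈ S, cB b ≤ (N'.filter (fun e => Q (g' e))).card := by
    have : ∑ b ∈ S, cB b = (S.sigma (fun b => (Finset.univ : Finset (Fin (cB b))))).card := by
      simp
    rw [this]
    refine (Finset.card_le_card ?_).trans (Finset.card_image_le (f := g'))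
    rintro ⟨b, j⟩ hy
    simp only [S, Finset.mem_sigma, Finset.mem_filter, Finset.mem_univ, true_and, and_true] at hy
    obtain ⟨e, he, hge⟩ := hQ _ (hy j)
    exact Finset.mem_image.2 ⟨e, Finset.mem_filter.2 ⟨he, hge ▸ hy j⟩, hge⟩
  omega

lemma neg_one_le_vote {β : Type*} [DecidableEq β] (r : β → ℕ) (x y : Option β) :
    -1 ≤ vote r x y := by
  rcases x with _ | x <;> rcases y with _ | y <;> simp only [vote] <;> (try split_ifs) <;> norm_num

/-- Let `N` be a matching in `G` (with realization `N'`) that admits a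
2-level witness. Then `|N| ≥ (2/3)·|M_max|`, where `M_max` is a maximum-size matching
in `G`. -/
theorem statement10 {α β : Type*} [Fintype α] [Fintype β] [DecidableEq α] [DecidableEq β]
    (I : PrefInstance α β) (N : Finset (α × β)) (hN : I.IsMatching N)
    (N' : Finset (I.CloneA × I.CloneB)) (hN' : I.IsRealization N N')
    (lA : I.CloneA → Bool) (lB : I.CloneB → Bool)
    (hW : I.TwoLevelWitness N N' lA lB)
    (Mmax : Finset (α × β)) (hMmax : I.IsMatching Mmax)
    (hmax : ∀ T, I.IsMatching T → T.card ≤ Mmax.card) :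
    2 * Mmax.card ≤ 3 * N.card := by
  obtain ⟨-, -, himg, hcard⟩ := hN'
  obtain ⟨hA1, hB0, hlev, hneg, -⟩ := hW
  have hinj : Set.InjOn (fun e : I.CloneA × I.CloneB => (e.1.1, e.2.1)) N' := by
    apply Finset.card_image_iff.1
    rw [himg, hcard]
  have hrow : ∀ a, (Mmax.filter (fun e => e.1 = a)).card ≤ I.capA a := by
    intro a
    refine (Finset.card_le_card_of_injOn Prod.snd ?_ ?_).trans (hMmax.2.1 a)
    · rintro ⟨a', b⟩ h
      simp only [Finset.coe_filter, Set.mem_ofPred_eq] at h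
      obtain ⟨h, rfl⟩ := h
      simpa [PrefInstance.rowSet] using h
    · rintro ⟨a₁, b₁⟩ h₁ ⟨a₂, b₂⟩ h₂ h
      simp at h₁ h₂ h
      simp [h₁.2, h₂.2, h]
  have hcol : ∀ b, (Mmax.filter (fun e => e.2 = b)).card ≤ I.capB b := by
    intro b
    refine (Finset.card_le_card_of_injOn Prod.fst ?_ ?_).trans (hMmax.2.2 b)
    · rintro ⟨a, b'⟩ h
      simp only [Finset.coe_filter, Set.mem_ofPred_eq] at h
      obtain ⟨h, rfl⟩ := h
      simpa [PrefInstance.colSet] using h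
    · rintro ⟨a₁, b₁⟩ h₁ ⟨a₂, b₂⟩ h₂ h
      simp at h₁ h₂ h
      simp [h₁.2, h₂.2, h]
  have key1 := card_le_card_add_card_level I.capA I.capB Prod.fst Prod.snd Prod.fst Prod.snd
    (fun e : I.CloneA × I.CloneB => (e.1.1, e.2.1)) Mmax N N' hinj himg (fun _ => rfl) hrow hcol
    (fun y => lB y = true)
    (by
      intro y hy
      by_contra! hcon
      have := hB0 y (fun x hx => hcon _ hx rfl)
      simp_all)
    (by
      rintro x hx ⟨a, b⟩ he heN rfl y rfl
      have hfree : ∀ y, (x, y) ∉ N' := fun y hy => hx _ hy rfl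
      by_contra hy
      have hw := hneg x y (Or.inl ⟨hMmax.1 he, heN⟩) (hA1 x hfree) (by simpa using hy)
      -- the free clone `x` votes `+1`, so the weight is at least `0`
      have hp : I.partnerA N' x = none := dif_neg (not_exists.2 hfree)
      have hv := neg_one_le_vote (I.rankB y.1) (some x.1)
        (Option.map Sigma.fst (I.partnerB N' y))
      simp only [PrefInstance.wtE, hp, Option.map_none] at hw
      simp only [vote] at hw hv
      omega)
  have key0 : Mmax.card ≤ N.card + (N'.filter (fun e => lA e.1 = false)).card :=
    card_le_card_add_card_level I.capB I.capA Prod.snd Prod.fst Prod.snd Prod.fst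
    (fun e : I.CloneA × I.CloneB => (e.1.1, e.2.1)) Mmax N N' hinj himg (fun _ => rfl) hcol hrow
    (fun x => lA x = false)
    (by
      intro x hx
      by_contra! hcon
      have := hA1 x (fun y hy => hcon _ hy rfl)
      simp_all)
    (by
      rintro y hy ⟨a, b⟩ he heN rfl x rfl
      have hfree : ∀ x, (x, y) ∉ N' := fun x hx => hy _ hx rfl
      by_contra hx
      have hw := hneg x y (Or.inl ⟨hMmax.1 he, heN⟩) (by simpa using hx) (hB0 y hfree)
      have hp : I.partnerB N' y = none := dif_neg (not_exists.2 hfree)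
      have hv := neg_one_le_vote (I.rankA x.1) (some y.1)
        (Option.map Sigma.fst (I.partnerA N' x))
      simp only [PrefInstance.wtE, hp, Option.map_none] at hw
      simp only [vote] at hw hv
      omega)
  have hsplit : (N'.filter (fun e => lA e.1 = true)).card +
      (N'.filter (fun e => lA e.1 = false)).card = N'.card := by
    simpa using Finset.card_filter_add_card_filter_not (s := N') (fun e => lA e.1 = true)
  have hsame : N'.filter (fun e => lB e.2 = true) = N'.filter (fun e => lA e.1 = true) :=
    Finset.filter_congr fun e he => by rw [hlev e he]
  rw [hsame] at key1
  omega
end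

section
/- Every instance G = (A∪B, E) with capacities and strict preferences admits a popular matching M_0 such that: every popular matching of G has size at most |M_0|; Δ(M_0,T) > 0 for every matching T with |T| > |M_0| (so every weakly popular matching of G also has size at most |M_0|); and |M_0| ≥ (2/3)·|M_max|, where M_max is a maximum-size matching in G. -/
/-! ### Lower bounds for `deltaSet` by potentials -/

section Delta

variable {β : Type*} [DecidableEq β]

theorem sdiff_card_add (S₀ S₁ : Finset β) : (S₀ \ S₁).card + (S₀ ∩ S₁).card = S₀.card :=
  Finset.card_sdiff_add_card_inter S₀ S₁

theorem card_le_kOf (S₀ S₁ : Finset β) : (S₀ \ S₁).card ≤ kOf S₀ S₁ := by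
  have h := sdiff_card_add S₀ S₁
  unfold kOf
  omega

theorem kOf_comm (S₀ S₁ : Finset β) : kOf S₀ S₁ = kOf S₁ S₀ := by
  unfold kOf
  rw [max_comm, Finset.inter_comm]

theorem kOf_gap (S₀ S₁ : Finset β) (h : (S₀ \ S₁).card < kOf S₀ S₁) : S₀.card < S₁.card := by
  have h0 := sdiff_card_add S₀ S₁
  have h1 := sdiff_card_add S₁ S₀
  rw [Finset.inter_comm] at h1
  unfold kOf at h
  omega

theorem length_padded (S₀ S₁ : Finset β) :
    (padded S₀ S₁ (kOf S₀ S₁)).length = kOf S₀ S₁ := by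
  have := card_le_kOf S₀ S₁
  simp [padded]
  omega

theorem sum_getD {β : Type*} (φ : Option β → ℤ) (l : List (Option β)) (k : ℕ) (h : l.length = k) :
    ∑ i : Fin k, φ (l.getD (i : ℕ) none) = (l.map φ).sum := by
  subst h
  rw [← Fin.sum_univ_fun_getElem]
  refine Finset.sum_congr rfl fun i _ => ?_
  simp

theorem sum_map_padded (φ : Option β → ℤ) (S₀ S₁ : Finset β) (k : ℕ) :
    ((padded S₀ S₁ k).map φ).sum =
      ∑ x ∈ S₀ \ S₁, φ (some x) + (k - (S₀ \ S₁).card : ℕ) * φ none := by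
  simp [padded, Function.comp_def, Finset.sum_map_toList]

theorem padded_cases (S₀ S₁ : Finset β) (i : ℕ) (hi : i < kOf S₀ S₁) :
    (∃ x ∈ S₀ \ S₁, (padded S₀ S₁ (kOf S₀ S₁)).getD i none = some x) ∨
      ((padded S₀ S₁ (kOf S₀ S₁)).getD i none = none ∧ S₀.card < S₁.card) := by
  have hl : i < (padded S₀ S₁ (kOf S₀ S₁)).length := by rwa [length_padded]
  have hm := List.getElem_mem hl
  rw [List.getD_eq_getElem _ _ hl]
  generalize (padded S₀ S₁ (kOf S₀ S₁))[i] = z at hm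
  rw [padded, List.mem_append, List.mem_map, List.mem_replicate] at hm
  rcases hm with ⟨x, hx, rfl⟩ | ⟨h, rfl⟩
  · exact Or.inl ⟨x, Finset.mem_toList.1 hx, rfl⟩
  · exact Or.inr ⟨rfl, kOf_gap _ _ (by omega)⟩

/-- Weak duality for the assignment problem defining `deltaSet`: if every admissible pair of
entries has vote at least `φ x + ψ y`, then the total potential bounds `deltaSet` from below.
Two nulls are never paired, as only the smaller set is padded. -/
theorem le_deltaSet (r : β → ℕ) (S₀ S₁ : Finset β) (φ ψ : Option β → ℤ)
    (h : ∀ x ∈ S₀ \ S₁, ∀ y ∈ S₁ \ S₀, φ (some x) + ψ (some y) ≤ vote r (some x) (some y))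
    (h0 : S₀.card < S₁.card → ∀ y ∈ S₁ \ S₀, φ none + ψ (some y) ≤ -1)
    (h1 : S₁.card < S₀.card → ∀ x ∈ S₀ \ S₁, φ (some x) + ψ none ≤ 1) :
    (∑ x ∈ S₀ \ S₁, φ (some x) + (kOf S₀ S₁ - (S₀ \ S₁).card : ℕ) * φ none) +
      (∑ y ∈ S₁ \ S₀, ψ (some y) + (kOf S₀ S₁ - (S₁ \ S₀).card : ℕ) * ψ none)
      ≤ deltaSet r S₀ S₁ := by
  unfold deltaSet
  refine Finset.le_inf' _ _ fun σ _ => ?_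
  have hlen : (padded S₁ S₀ (kOf S₀ S₁)).length = kOf S₀ S₁ := by
    rw [kOf_comm]; exact length_padded S₁ S₀
  rw [← sum_map_padded, ← sum_map_padded, ← sum_getD φ _ _ (length_padded S₀ S₁),
    ← sum_getD ψ _ _ hlen,
    ← Equiv.sum_comp σ fun i => ψ ((padded S₁ S₀ (kOf S₀ S₁)).getD (i : ℕ) none),
    ← Finset.sum_add_distrib]
  refine Finset.sum_le_sum fun i _ => ?_
  have c0 := padded_cases S₀ S₁ i i.2
  have c1 := padded_cases S₁ S₀ (σ i) ((σ i).2.trans_eq (kOf_comm S₀ S₁))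
  rw [kOf_comm S₁ S₀] at c1
  rcases c0 with ⟨x, hx, ex⟩ | ⟨ex, lx⟩ <;> rcases c1 with ⟨y, hy, ey⟩ | ⟨ey, ly⟩ <;>
    rw [ex, ey]
  · exact h x hx y hy
  · exact h1 ly x hx
  · exact h0 lx y hy
  · omega

theorem vote_add_vote_le (r : β → ℕ) (x y : Option β) : vote r x y + vote r y x ≤ 0 := by
  rcases x with _ | x <;> rcases y with _ | y <;> simp only [vote] <;> try norm_num
  by_cases hxy : x = y
  · simp [hxy]
  · rw [if_neg hxy, if_neg (Ne.symm hxy)]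
    split_ifs <;> omega

theorem deltaSet_add_le (r : β → ℕ) (S₀ S₁ : Finset β) :
    deltaSet r S₀ S₁ + deltaSet r S₁ S₀ ≤ 0 := by
  have e : deltaSet r S₁ S₀ ≤ ∑ i : Fin (kOf S₀ S₁),
      vote r ((padded S₁ S₀ (kOf S₀ S₁)).getD (i : ℕ) none)
             ((padded S₀ S₁ (kOf S₀ S₁)).getD (i : ℕ) none) := by
    rw [kOf_comm S₀ S₁]
    exact Finset.inf'_le _ (Finset.mem_univ (1 : Equiv.Perm (Fin (kOf S₁ S₀))))
  have e' : deltaSet r S₀ S₁ ≤ ∑ i : Fin (kOf S₀ S₁),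
      vote r ((padded S₀ S₁ (kOf S₀ S₁)).getD (i : ℕ) none)
             ((padded S₁ S₀ (kOf S₀ S₁)).getD (i : ℕ) none) :=
    Finset.inf'_le _ (Finset.mem_univ (1 : Equiv.Perm (Fin (kOf S₀ S₁))))
  refine (add_le_add e' e).trans ?_
  rw [← Finset.sum_add_distrib]
  exact Finset.sum_nonpos fun i _ => vote_add_vote_le _ _ _

end Delta

/-! ### The choice of a single vertex among two copies of each neighbor -/

section Choice

variable {N K : Type*} [LinearOrder K]

/-- The neighbors having a copy in `W` that is strictly better than `x` (smaller key). -/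
def betterThan (key : N × Bool → K) (W : Set (N × Bool)) (x : N × Bool) : Set N :=
  {n | ∃ j, (n, j) ∈ W ∧ key (n, j) < key x}

/-- The offers in `W` rejected by a vertex of capacity `cap` that ranks offers by `key`:
those whose twin (the other copy of the same neighbor) is on offer and better, and those beaten
by at least `cap` distinct neighbors. -/
def rejected (cap : ℕ) (key : N × Bool → K) (W : Set (N × Bool)) : Set (N × Bool) :=
  {x | x ∈ W ∧ (((x.1, !x.2) ∈ W ∧ key (x.1, !x.2) < key x) ∨
    cap ≤ (betterThan key W x).ncard)}

theorem rejected_mono [Finite N] (cap : ℕ) (key : N × Bool → K) {W W' : Set (N × Bool)} (h : W ⊆ W') :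
    rejected cap key W ⊆ rejected cap key W' := by
  rintro x ⟨hx, h1 | h1⟩
  · exact ⟨h hx, Or.inl ⟨h h1.1, h1.2⟩⟩
  · refine ⟨h hx, Or.inr (h1.trans (Set.ncard_le_ncard ?_ (Set.toFinite _)))⟩
    rintro n ⟨j, hj, hk⟩
    exact ⟨j, h hj, hk⟩

/-- At most one copy of each neighbor is chosen. -/
theorem chosen_unique (cap : ℕ) (key : N × Bool → K) (W : Set (N × Bool))
    (hinj : Set.InjOn key W) {n : N} {i j : Bool}
    (hi : (n, i) ∈ W \ rejected cap key W) (hj : (n, j) ∈ W \ rejected cap key W) : i = j := by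
  by_contra hne
  have hj' : j = !i := by cases i <;> cases j <;> simp_all
  subst hj'
  rcases lt_trichotomy (key (n, i)) (key (n, !i)) with h | h | h
  · exact hj.2 ⟨hj.1, Or.inl (by simpa using ⟨hi.1, h⟩)⟩
  · have := hinj hi.1 hj.1 h
    simp at this
  · exact hi.2 ⟨hi.1, Or.inl ⟨hj.1, h⟩⟩

theorem chosen_card_le [Finite N] (cap : ℕ) (key : N × Bool → K) (W : Set (N × Bool))
    (hinj : Set.InjOn key W) :
    (Prod.fst '' (W \ rejected cap key W)).ncard ≤ cap := by
  rcases (W \ rejected cap key W).eq_empty_or_nonempty with h | h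
  · simp [h]
  obtain ⟨y, hy, hmax⟩ := Set.exists_max_image _ key (Set.toFinite _) h
  have hlt : (betterThan key W y).ncard < cap := by
    by_contra hc
    exact hy.2 ⟨hy.1, Or.inr (not_lt.1 hc)⟩
  have hsub : Prod.fst '' (W \ rejected cap key W) ⊆ insert y.1 (betterThan key W y) := by
    rintro n ⟨c, hc, rfl⟩
    by_cases hcy : c.1 = y.1
    · exact Or.inl hcy
    · refine Or.inr ⟨c.2, hc.1, lt_of_le_of_ne (hmax c hc) fun he => hcy ?_⟩
      exact congrArg Prod.fst (hinj hc.1 hy.1 he)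
  calc _ ≤ _ := Set.ncard_le_ncard hsub (Set.toFinite _)
    _ ≤ _ := Set.ncard_insert_le _ _
    _ ≤ cap := hlt

/-- If no copy of a neighbor is chosen although `x` is one of its copies on offer, then `x` loses
by count: a rejection in favor of the twin passes to the twin, which is itself rejected. -/
theorem le_better_of_not_chosen [Finite N] (cap : ℕ) (key : N × Bool → K) (W : Set (N × Bool))
    {x : N × Bool} (hx : x ∈ W) (hno : ∀ j, (x.1, j) ∉ W \ rejected cap key W) :
    cap ≤ (betterThan key W x).ncard := by
  have hr : ∀ j, (x.1, j) ∈ W → (x.1, j) ∈ rejected cap key W := fun j hj => by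
    by_contra hc
    exact hno j ⟨hj, hc⟩
  rcases hr x.2 hx with ⟨-, ⟨h1, h2⟩ | h1⟩
  · rcases hr _ h1 with ⟨-, ⟨h3, h4⟩ | h3⟩
    · simp only [Bool.not_not] at h4
      exact absurd h2 h4.asymm
    · refine h3.trans (Set.ncard_le_ncard ?_ (Set.toFinite _))
      rintro n ⟨j, hj, hk⟩
      exact ⟨j, hj, hk.trans h2⟩
  · exact h1

/-- A vertex that chooses no copy of an offered neighbor is saturated by better choices. -/
theorem saturated_of_not_chosen [Finite N] (cap : ℕ) (key : N × Bool → K) (W : Set (N × Bool))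
    (hinj : Set.InjOn key W) {x : N × Bool} (hx : x ∈ W)
    (hno : ∀ j, (x.1, j) ∉ W \ rejected cap key W) :
    cap ≤ (Prod.fst '' (W \ rejected cap key W)).ncard ∧
      ∀ y ∈ W \ rejected cap key W, key y < key x := by
  constructor
  · obtain ⟨z, ⟨hz, hzno⟩, hmin⟩ := Set.exists_min_image
      {z | z ∈ W ∧ ∀ j, (z.1, j) ∉ W \ rejected cap key W} key (Set.toFinite _) ⟨x, hx, hno⟩
    refine (le_better_of_not_chosen cap key W hz hzno).trans
      (Set.ncard_le_ncard ?_ (Set.toFinite _))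
    rintro n ⟨j, hj, hk⟩
    by_contra hc
    refine absurd (hmin (n, j) ⟨hj, fun i hi => hc ⟨_, hi, rfl⟩⟩) (not_le.2 hk)
  · intro y hy
    rcases lt_trichotomy (key y) (key x) with h | h | h
    · exact h
    · have := hinj hy.1 hx h
      subst this
      exact absurd hy (hno y.2)
    · refine absurd ⟨hy.1, Or.inr ((le_better_of_not_chosen cap key W hx hno).trans
        (Set.ncard_le_ncard ?_ (Set.toFinite _)))⟩ hy.2
      rintro n ⟨j, hj, hk⟩
      exact ⟨j, hj, hk.trans h⟩

end Choice

/-! ### Existence of a two-level stable matching -/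

namespace PrefInstance

variable {α β : Type*} [Fintype α] [Fintype β] [DecidableEq α] [DecidableEq β]

/-- Key of the copy `(b, i)` for `a`: level `0` (`false`) before level `1` (`true`), then rank. -/
def keyA (I : PrefInstance α β) (a : α) (x : β × Bool) : ℕ ×ₗ ℕ :=
  toLex (if x.2 then 1 else 0, I.rankA a x.1)

/-- Key of the copy `(a, i)` for `b`: level `1` (`true`) before level `0` (`false`), then rank. -/
def keyB (I : PrefInstance α β) (b : β) (x : α × Bool) : ℕ ×ₗ ℕ :=
  toLex (if x.2 then 0 else 1, I.rankB b x.1)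

/-- In the matching `M` with levels `l`, vertex `a` is willing to take the level-`i` copy
of `(a, b)`: it has spare capacity or a partner worse than this copy. -/
def AcceptsA (I : PrefInstance α β) (M : Finset (α × β)) (l : α × β → Bool)
    (a : α) (b : β) (i : Bool) : Prop :=
  (rowSet M a).card < I.capA a ∨ ∃ b' ∈ rowSet M a, I.keyA a (b, i) < I.keyA a (b', l (a, b'))

/-- The analogue of `AcceptsA` for the other side. -/
def AcceptsB (I : PrefInstance α β) (M : Finset (α × β)) (l : α × β → Bool)
    (a : α) (b : β) (i : Bool) : Prop :=
  (colSet M b).card < I.capB b ∨ ∃ a' ∈ colSet M b, I.keyB b (a, i) < I.keyB b (a', l (a', b))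

/-- `M` with levels `l` is stable in the graph with two copies of every edge: no copy of an
edge outside `M` is acceptable to both of its endpoints. -/
def TwoLevelStable (I : PrefInstance α β) (M : Finset (α × β)) (l : α × β → Bool) : Prop :=
  ∀ a b i, (a, b) ∈ I.E → (a, b) ∉ M → ¬ (I.AcceptsA M l a b i ∧ I.AcceptsB M l a b i)

theorem keyA_injOn (I : PrefInstance α β) (a : α) :
    Set.InjOn (I.keyA a) {x | (a, x.1) ∈ I.E} := by
  rintro ⟨b, i⟩ hb ⟨b', j⟩ hb' h
  have h' := congrArg ofLex h
  simp only [keyA, ofLex_toLex, Prod.mk.injEq] at h'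
  have h2 := I.rankA_injOn a hb hb' h'.2
  have h1 : i = j := by
    cases i <;> cases j <;> simp_all
  exact Prod.ext h2 h1

theorem keyB_injOn (I : PrefInstance α β) (b : β) :
    Set.InjOn (I.keyB b) {x | (x.1, b) ∈ I.E} := by
  rintro ⟨b, i⟩ hb ⟨b', j⟩ hb' h
  have h' := congrArg ofLex h
  simp only [keyB, ofLex_toLex, Prod.mk.injEq] at h'
  have h2 := I.rankB_injOn _ hb hb' h'.2
  have h1 : i = j := by
    cases i <;> cases j <;> simp_all
  exact Prod.ext h2 h1

/-- The offers in `Y` seen by `a`. -/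
def offersA (Y : Set (α × β × Bool)) (a : α) : Set (β × Bool) := {x | (a, x.1, x.2) ∈ Y}

/-- The offers in `X` seen by `b`. -/
def offersB (X : Set (α × β × Bool)) (b : β) : Set (α × Bool) := {x | (x.1, b, x.2) ∈ X}

/-- The copies of edges in `Y` rejected by their endpoint in `A`. -/
def rejA (I : PrefInstance α β) (Y : Set (α × β × Bool)) : Set (α × β × Bool) :=
  {p | (p.2.1, p.2.2) ∈ rejected (I.capA p.1) (I.keyA p.1) (offersA Y p.1)}

/-- The copies of edges in `X` rejected by their endpoint in `B`. -/
def rejB (I : PrefInstance α β) (X : Set (α × β × Bool)) : Set (α × β × Bool) :=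
  {p | (p.1, p.2.2) ∈ rejected (I.capB p.2.1) (I.keyB p.2.1) (offersB X p.2.1)}

theorem rejA_mono (I : PrefInstance α β) : Monotone I.rejA :=
  fun _ _ h _ hp => rejected_mono _ _ (fun _ hx => h hx) hp

theorem rejB_mono (I : PrefInstance α β) : Monotone I.rejB :=
  fun _ _ h _ hp => rejected_mono _ _ (fun _ hx => h hx) hp

/-- Two copies of every edge of the graph. -/
def copies (I : PrefInstance α β) : Set (α × β × Bool) := {p | (p.1, p.2.1) ∈ I.E}

/-- One round of deferred acceptance: `B` rejects from `X`, `A` rejects from what `B` has not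
rejected, and the copies surviving this are offered to `B`. -/
def round (I : PrefInstance α β) : Set (α × β × Bool) →o Set (α × β × Bool) where
  toFun X := I.copies \ I.rejA (I.copies \ I.rejB X)
  monotone' _ _ h := Set.sdiff_subset_sdiff_right
    (I.rejA_mono (Set.sdiff_subset_sdiff_right (I.rejB_mono h)))

theorem exists_twoLevelStable (I : PrefInstance α β) :
    ∃ M l, I.IsMatching M ∧ I.TwoLevelStable M l := by
  classical
  obtain ⟨X, hX⟩ : ∃ X, I.round X = X := ⟨_, I.round.map_lfp⟩
  obtain ⟨Y, hY⟩ : ∃ Y, Y = I.copies \ I.rejB X := ⟨_, rfl⟩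
  have hX' : X = I.copies \ I.rejA Y := by rw [hY]; exact hX.symm
  have hXc : ∀ p ∈ X, p ∈ I.copies := fun p hp => by rw [hX'] at hp; exact hp.1
  have hYc : ∀ p ∈ Y, p ∈ I.copies := fun p hp => by rw [hY] at hp; exact hp.1
  have hB : ∀ a b i, (a, b, i) ∈ X ∩ Y ↔
      (a, i) ∈ offersB X b \ rejected (I.capB b) (I.keyB b) (offersB X b) := fun a b i => by
    constructor
    · rintro ⟨h1, h2⟩
      rw [hY] at h2
      exact ⟨h1, h2.2⟩
    · rintro ⟨h1, h2⟩
      refine ⟨h1, ?_⟩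
      rw [hY]
      exact ⟨hXc _ h1, h2⟩
  have hA : ∀ a b i, (a, b, i) ∈ X ∩ Y ↔
      (b, i) ∈ offersA Y a \ rejected (I.capA a) (I.keyA a) (offersA Y a) := fun a b i => by
    constructor
    · rintro ⟨h1, h2⟩
      rw [hX'] at h1
      exact ⟨h2, h1.2⟩
    · rintro ⟨h1, h2⟩
      refine ⟨?_, h1⟩
      rw [hX']
      exact ⟨hYc _ h1, h2⟩
  have injA : ∀ a, Set.InjOn (I.keyA a) (offersA Y a) := fun a =>
    (I.keyA_injOn a).mono fun x hx => hYc _ hx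
  have injB : ∀ b, Set.InjOn (I.keyB b) (offersB X b) := fun b =>
    (I.keyB_injOn b).mono fun x hx => hXc _ hx
  let M : Finset (α × β) := Finset.univ.filter fun p => ∃ i, (p.1, p.2, i) ∈ X ∩ Y
  let l : α × β → Bool := fun p => decide ((p.1, p.2, true) ∈ X ∩ Y)
  have hM : ∀ a b, (a, b) ∈ M ↔ ∃ i, (a, b, i) ∈ X ∩ Y := fun a b => by simp [M]
  have hl : ∀ a b, (a, b) ∈ M → (a, b, l (a, b)) ∈ X ∩ Y := fun a b h => by
    obtain ⟨i, hi⟩ := (hM a b).1 h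
    have : l (a, b) = i := by
      cases i
      · refine decide_eq_false fun ht => ?_
        have := chosen_unique _ _ _ (injA a) ((hA _ _ _).1 hi) ((hA _ _ _).1 ht)
        simp at this
      · exact decide_eq_true hi
    rwa [this]
  have rowM : ∀ a, (rowSet M a : Set β) =
      Prod.fst '' (offersA Y a \ rejected (I.capA a) (I.keyA a) (offersA Y a)) := fun a => by
    ext b
    simp only [rowSet, Finset.coe_filter, Finset.mem_univ, true_and, Set.mem_ofPred_eq, hM]
    constructor
    · rintro ⟨i, hi⟩
      exact ⟨(b, i), (hA _ _ _).1 hi, rfl⟩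
    · rintro ⟨⟨b', i⟩, hi, rfl⟩
      exact ⟨i, (hA _ _ _).2 hi⟩
  have colM : ∀ b, (colSet M b : Set α) =
      Prod.fst '' (offersB X b \ rejected (I.capB b) (I.keyB b) (offersB X b)) := fun b => by
    ext a
    simp only [colSet, Finset.coe_filter, Finset.mem_univ, true_and, Set.mem_ofPred_eq, hM]
    constructor
    · rintro ⟨i, hi⟩
      exact ⟨(a, i), (hB _ _ _).1 hi, rfl⟩
    · rintro ⟨⟨b', i⟩, hi, rfl⟩
      exact ⟨i, (hB _ _ _).2 hi⟩
  refine ⟨M, l, ⟨?_, ?_, ?_⟩, ?_⟩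
  · rintro ⟨a, b⟩ h
    exact hXc _ (hl a b h).1
  · intro a
    rw [← Set.ncard_coe_finset, rowM]
    exact chosen_card_le _ _ _ (injA a)
  · intro b
    rw [← Set.ncard_coe_finset, colM]
    exact chosen_card_le _ _ _ (injB b)
  · rintro a b i hE hnM ⟨accA, accB⟩
    have hno : ∀ j, (a, b, j) ∉ X ∩ Y := fun j hj => hnM ((hM a b).2 ⟨j, hj⟩)
    by_cases hx : (a, b, i) ∈ X
    · obtain ⟨h1, h2⟩ := saturated_of_not_chosen _ _ _ (injB b) (x := (a, i)) hx
        fun j hj => hno j ((hB _ _ _).2 hj)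
      rw [← colM, Set.ncard_coe_finset] at h1
      rcases accB with h | ⟨a', ha', h⟩
      · omega
      · refine h.asymm (h2 (a', l (a', b)) ((hB _ _ _).1 (hl a' b ?_)))
        simpa [colSet] using ha'
    · have hy : (a, b, i) ∈ Y := by
        rw [hX'] at hx
        by_contra hy
        exact hx ⟨hE, fun hr => hy hr.1⟩
      obtain ⟨h1, h2⟩ := saturated_of_not_chosen _ _ _ (injA a) (x := (b, i)) hy
        fun j hj => hno j ((hA _ _ _).2 hj)
      rw [← rowM, Set.ncard_coe_finset] at h1
      rcases accA with h | ⟨b', hb', h⟩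
      · omega
      · refine h.asymm (h2 (b', l (a, b')) ((hA _ _ _).1 (hl a b' ?_)))
        simpa [rowSet] using hb'

/-! ### Summation over edges -/

theorem sum_rowSet (S : Finset (α × β)) (f : α × β → ℤ) :
    ∑ a, ∑ b ∈ rowSet S a, f (a, b) = ∑ p ∈ S, f p := by
  simp only [rowSet, Finset.sum_filter]
  rw [← Fintype.sum_prod_type' (f := fun a b => if (a, b) ∈ S then f (a, b) else 0)]
  simp

theorem sum_colSet (S : Finset (α × β)) (f : α × β → ℤ) :
    ∑ b, ∑ a ∈ colSet S b, f (a, b) = ∑ p ∈ S, f p := by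
  simp only [colSet, Finset.sum_filter]
  rw [Finset.sum_comm,
    ← Fintype.sum_prod_type' (f := fun a b => if (a, b) ∈ S then f (a, b) else 0)]
  simp

theorem rowSet_sdiff {α β : Type*} [Fintype β] [DecidableEq α] [DecidableEq β]
    (M T : Finset (α × β)) (a : α) :
    rowSet M a \ rowSet T a = rowSet (M \ T) a := by
  ext; simp [rowSet]

theorem colSet_sdiff {α β : Type*} [Fintype α] [DecidableEq α] [DecidableEq β]
    (M T : Finset (α × β)) (b : β) :
    colSet M b \ colSet T b = colSet (M \ T) b := by
  ext; simp [colSet]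

theorem sum_card_rowSet (S : Finset (α × β)) : ∑ a, ((rowSet S a).card : ℤ) = S.card := by
  simpa using sum_rowSet S fun _ => 1

theorem sum_card_colSet (S : Finset (α × β)) : ∑ b, ((colSet S b).card : ℤ) = S.card := by
  simpa using sum_colSet S fun _ => 1

/-! ### Popularity of two-level stable matchings -/

open Classical in
/-- The potential of an edge `(a, b)` outside `M` at `a`: the least value of
`vote_a(b', b) - 2 l(a, b')` over the options `b'` of `a`, expressed by acceptance.
Spare capacity counts as a null option of level `1`. -/
noncomputable def potA (I : PrefInstance α β) (M : Finset (α × β)) (l : α × β → Bool)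
    (p : α × β) : ℤ :=
  1 - (if I.AcceptsA M l p.1 p.2 false then 2 else 0)
    - (if I.AcceptsA M l p.1 p.2 true then 2 else 0)

open Classical in
/-- The potential of an edge `(a, b)` outside `M` at `b`: the least value of
`vote_b(a', a) + 2 l(a', b)` over the options `a'` of `b`, expressed by acceptance.
Spare capacity counts as a null option of level `0`. -/
noncomputable def potB (I : PrefInstance α β) (M : Finset (α × β)) (l : α × β → Bool)
    (p : α × β) : ℤ :=
  3 - (if I.AcceptsB M l p.1 p.2 false then 2 else 0)
    - (if I.AcceptsB M l p.1 p.2 true then 2 else 0)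

theorem potA_add_potB (I : PrefInstance α β) {M : Finset (α × β)} {l : α × β → Bool}
    (hs : I.TwoLevelStable M l) {p : α × β} (hE : p ∈ I.E) (hM : p ∉ M) :
    0 ≤ potA I M l p + potB I M l p := by
  have h0 := hs p.1 p.2 false hE hM
  have h1 := hs p.1 p.2 true hE hM
  unfold potA potB
  split_ifs <;> first | omega | (exfalso; tauto)

/-- Twice the level, as an integer. -/
def twice (i : Bool) : ℤ := if i then 2 else 0

theorem le_DeltaA (I : PrefInstance α β) {M T : Finset (α × β)} {l : α × β → Bool}
    (hME : M ⊆ I.E) (hT : I.IsMatching T) (a : α) :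
    ∑ b ∈ rowSet (M \ T) a, twice (l (a, b)) + ∑ b ∈ rowSet (T \ M) a, potA I M l (a, b)
      + max 0 ((rowSet T a).card - (rowSet M a).card : ℤ)
      + ((rowSet T a).card - (rowSet M a).card : ℤ) ≤ I.DeltaA M T a := by
  have key := le_deltaSet (I.rankA a) (rowSet M a) (rowSet T a)
    (fun x => x.elim 2 fun b => twice (l (a, b)))
    (fun y => y.elim (-1) fun b => potA I M l (a, b)) ?_ ?_ ?_
  · refine le_trans (le_of_eq ?_) key
    simp only [Option.elim, rowSet_sdiff]
    have h0 := sdiff_card_add (rowSet M a) (rowSet T a)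
    have h1 := sdiff_card_add (rowSet T a) (rowSet M a)
    rw [Finset.inter_comm] at h1
    rw [rowSet_sdiff] at h0 h1
    unfold kOf
    omega
  · intro x hx y hy
    simp only [Option.elim, potA, vote]
    simp only [rowSet, Finset.mem_sdiff, Finset.mem_filter, Finset.mem_univ, true_and] at hx hy
    have hne : x ≠ y := by rintro rfl; exact hy.2 hx.1
    have hr : I.rankA a x ≠ I.rankA a y := fun h =>
      hne (I.rankA_injOn a (hME hx.1) (hT.1 hy.1) h)
    have acc : ∀ i, I.keyA a (y, i) < I.keyA a (x, l (a, x)) → I.AcceptsA M l a y i :=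
      fun i hi => Or.inr ⟨x, by simpa [rowSet] using hx.1, hi⟩
    simp only [keyA, Prod.Lex.toLex_lt_toLex] at acc
    have acc0 := acc false
    have acc1 := acc true
    rw [if_neg hne]
    cases hlx : l (a, x) <;> simp only [hlx, twice] at acc0 acc1 ⊢ <;>
      rcases lt_or_gt_of_ne hr with h | h <;> simp [h, h.not_gt] at acc0 acc1 ⊢ <;>
      split_ifs <;> omega
  · intro hlt y hy
    have hc := hT.2.1 a
    have acc : ∀ i, I.AcceptsA M l a y i := fun i => Or.inl (by omega)
    simp [potA, acc]
  · intro hlt x hx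
    simp only [Option.elim, twice]
    split_ifs <;> norm_num

theorem le_DeltaB (I : PrefInstance α β) {M T : Finset (α × β)} {l : α × β → Bool}
    (hME : M ⊆ I.E) (hT : I.IsMatching T) (b : β) :
    -∑ a ∈ colSet (M \ T) b, twice (l (a, b)) + ∑ a ∈ colSet (T \ M) b, potB I M l (a, b)
      - ((colSet T b).card - (colSet M b).card : ℤ) ≤ I.DeltaB M T b := by
  have key := le_deltaSet (I.rankB b) (colSet M b) (colSet T b)
    (fun x => x.elim 0 fun a => - twice (l (a, b)))
    (fun y => y.elim 1 fun a => potB I M l (a, b)) ?_ ?_ ?_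
  · refine le_trans ?_ key
    simp only [Option.elim, colSet_sdiff, Finset.sum_neg_distrib]
    have h0 := sdiff_card_add (colSet M b) (colSet T b)
    have h1 := sdiff_card_add (colSet T b) (colSet M b)
    rw [Finset.inter_comm] at h1
    rw [colSet_sdiff] at h0 h1
    unfold kOf
    omega
  · intro x hx y hy
    simp only [Option.elim, potB, vote]
    simp only [colSet, Finset.mem_sdiff, Finset.mem_filter, Finset.mem_univ, true_and] at hx hy
    have hne : x ≠ y := by rintro rfl; exact hy.2 hx.1
    have hr : I.rankB b x ≠ I.rankB b y := fun h =>
      hne (I.rankB_injOn b (hME hx.1) (hT.1 hy.1) h)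
    have acc : ∀ i, I.keyB b (y, i) < I.keyB b (x, l (x, b)) → I.AcceptsB M l y b i :=
      fun i hi => Or.inr ⟨x, by simpa [colSet] using hx.1, hi⟩
    simp only [keyB, Prod.Lex.toLex_lt_toLex] at acc
    have acc0 := acc false
    have acc1 := acc true
    rw [if_neg hne]
    cases hlx : l (x, b) <;> simp only [hlx, twice] at acc0 acc1 ⊢ <;>
      rcases lt_or_gt_of_ne hr with h | h <;> simp [h, h.not_gt] at acc0 acc1 ⊢ <;>
      split_ifs <;> omega
  · intro hlt y hy
    have hc := hT.2.2 b
    have acc : ∀ i, I.AcceptsB M l y b i := fun i => Or.inl (by omega)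
    simp [potB, acc]
  · intro hlt x hx
    simp only [Option.elim, twice]
    split_ifs <;> norm_num

/-- A two-level stable matching `M` does not lose against any `T`, and wins by at least
`|T| - |M|` against a larger one. The level terms `± 2 l` of the two sides cancel edge by edge. -/
theorem le_Delta (I : PrefInstance α β) {M T : Finset (α × β)} {l : α × β → Bool}
    (hM : I.IsMatching M) (hs : I.TwoLevelStable M l) (hT : I.IsMatching T) :
    max 0 (T.card - M.card : ℤ) ≤ I.Delta M T := by
  have hA := Finset.sum_le_sum fun a (_ : a ∈ Finset.univ) => I.le_DeltaA (l := l) hM.1 hT a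
  have hB := Finset.sum_le_sum fun b (_ : b ∈ Finset.univ) => I.le_DeltaB (l := l) hM.1 hT b
  simp only [Finset.sum_add_distrib, Finset.sum_sub_distrib, Finset.sum_neg_distrib,
    sum_rowSet _ fun p => twice (l p), sum_colSet _ fun p => twice (l p),
    sum_rowSet _ (potA I M l), sum_colSet _ (potB I M l),
    sum_card_rowSet, sum_card_colSet] at hA hB
  have hpot : 0 ≤ ∑ p ∈ T \ M, potA I M l p + ∑ p ∈ T \ M, potB I M l p := by
    rw [← Finset.sum_add_distrib]
    refine Finset.sum_nonneg fun p hp => ?_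
    rw [Finset.mem_sdiff] at hp
    exact I.potA_add_potB hs (hT.1 hp.1) hp.2
  have h0 : 0 ≤ ∑ a, max 0 ((rowSet T a).card - (rowSet M a).card : ℤ) :=
    Finset.sum_nonneg fun a _ => le_max_left _ _
  have h1 : (T.card - M.card : ℤ) ≤ ∑ a, max 0 ((rowSet T a).card - (rowSet M a).card : ℤ) := by
    rw [← sum_card_rowSet, ← sum_card_rowSet, ← Finset.sum_sub_distrib]
    exact Finset.sum_le_sum fun a _ => le_max_right _ _
  unfold Delta
  refine max_le ?_ ?_ <;> linarith

theorem Delta_add_le (I : PrefInstance α β) (M T : Finset (α × β)) :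
    I.Delta M T + I.Delta T M ≤ 0 := by
  have hA : ∑ a, (I.DeltaA M T a + I.DeltaA T M a) ≤ 0 :=
    Finset.sum_nonpos fun a _ => deltaSet_add_le _ _ _
  have hB : ∑ b, (I.DeltaB M T b + I.DeltaB T M b) ≤ 0 :=
    Finset.sum_nonpos fun b _ => deltaSet_add_le _ _ _
  rw [Finset.sum_add_distrib] at hA hB
  unfold Delta
  linarith

/-! ### The size bound -/

theorem card_rowSet {α β : Type*} [Fintype β] [DecidableEq α] [DecidableEq β]
    (S : Finset (α × β)) (a : α) :
    (rowSet S a).card = (S.filter fun p => p.1 = a).card := by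
  refine Finset.card_bij (fun b _ => (a, b)) ?_ ?_ ?_
  · intro b hb
    simpa [rowSet] using hb
  · intro b _ b' _ h
    simpa using h
  · rintro ⟨a', b⟩ h
    simp only [Finset.mem_filter] at h
    obtain ⟨h, rfl⟩ := h
    exact ⟨b, by simpa [rowSet] using h, rfl⟩

theorem card_colSet {α β : Type*} [Fintype α] [DecidableEq α] [DecidableEq β]
    (S : Finset (α × β)) (b : β) :
    (colSet S b).card = (S.filter fun p => p.2 = b).card := by
  refine Finset.card_bij (fun a _ => (a, b)) ?_ ?_ ?_
  · intro b hb
    simpa [colSet] using hb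
  · intro b _ b' _ h
    simpa using h
  · rintro ⟨a, b'⟩ h
    simp only [Finset.mem_filter] at h
    obtain ⟨h, rfl⟩ := h
    exact ⟨a, by simpa [colSet] using h, rfl⟩

theorem card_eq_sum_fibers {P γ : Type*} [Fintype γ] [DecidableEq γ] (h : P → γ) (S : Finset P) :
    S.card = ∑ c, (S.filter fun p => h p = c).card :=
  Finset.card_eq_sum_card_fiberwise fun _ _ => Finset.mem_coe.2 (Finset.mem_univ _)

/-- Counting step of the size bound, written for edges `P` with endpoint maps `f`, `g` so that it
applies to either side. Here `U` is the set of unsaturated `f`-endpoints, and the `g`-endpoint of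
every edge of `T \ M` at `U` carries as many `M`-edges as `T`-edges, all of them in `L`. -/
theorem card_le_add_level {P γ δ : Type*} [DecidableEq P] [Fintype γ] [Fintype δ]
    [DecidableEq γ] [DecidableEq δ] (f : P → γ) (g : P → δ) (M T L : Finset P) (U : Set γ)
    (hU : ∀ c ∉ U, (T.filter fun p => f p = c).card ≤ (M.filter fun p => f p = c).card)
    (hL : ∀ p ∈ T, p ∉ M → f p ∈ U →
      (T.filter fun q => g q = g p).card ≤ (M.filter fun q => g q = g p).card ∧
      ∀ q ∈ M, g q = g p → q ∈ L) :
    T.card ≤ M.card + L.card := by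
  classical
  let R := (T \ M).filter fun p => f p ∈ U
  have h1 : T.card ≤ M.card + R.card := by
    rw [card_eq_sum_fibers f T, card_eq_sum_fibers f M, card_eq_sum_fibers f R,
      ← Finset.sum_add_distrib]
    refine Finset.sum_le_sum fun c _ => ?_
    by_cases hc : c ∈ U
    · rw [← Finset.card_sdiff_add_card_inter (T.filter fun p => f p = c)
        (M.filter fun p => f p = c), add_comm]
      refine add_le_add (Finset.card_le_card Finset.inter_subset_right)
        (Finset.card_le_card fun p hp => ?_)
      simp only [R, Finset.mem_sdiff, Finset.mem_filter] at hp ⊢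
      obtain ⟨⟨hpT, rfl⟩, hp⟩ := hp
      exact ⟨⟨⟨hpT, fun h => hp ⟨h, rfl⟩⟩, hc⟩, rfl⟩
    · exact (hU c hc).trans (Nat.le_add_right _ _)
  have h2 : R.card ≤ L.card := by
    rw [card_eq_sum_fibers g R, card_eq_sum_fibers g L]
    refine Finset.sum_le_sum fun d _ => ?_
    rcases (R.filter fun p => g p = d).eq_empty_or_nonempty with h | ⟨p, hp⟩
    · simp [h]
    · simp only [R, Finset.mem_sdiff, Finset.mem_filter] at hp
      obtain ⟨⟨⟨hpT, hpM⟩, hpU⟩, rfl⟩ := hp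
      obtain ⟨h3, h4⟩ := hL p hpT hpM hpU
      refine (Finset.card_le_card fun q hq => ?_).trans (h3.trans (Finset.card_le_card
        fun q hq => ?_))
      · simp only [R, Finset.mem_sdiff, Finset.mem_filter] at hq ⊢
        exact ⟨hq.1.1.1, hq.2⟩
      · simp only [Finset.mem_filter] at hq ⊢
        exact ⟨h4 q hq.1 hq.2, hq.2⟩
  omega

/-- Unsaturated vertices of `A` see only saturated neighbors holding level-`1` edges, and those
of `B` only saturated neighbors holding level-`0` edges; adding the two resulting bounds
gives the factor `2/3`. -/
theorem two_mul_card_le (I : PrefInstance α β) {M T : Finset (α × β)} {l : α × β → Bool}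
    (hs : I.TwoLevelStable M l) (hT : I.IsMatching T) : 2 * T.card ≤ 3 * M.card := by
  have hA := card_le_add_level Prod.fst Prod.snd M T (M.filter fun p => l p = true)
    {a | (rowSet M a).card < I.capA a} (fun a ha => ?_) ?_
  · have hB := card_le_add_level Prod.snd Prod.fst M T (M.filter fun p => ¬ l p = true)
      {b | (colSet M b).card < I.capB b} (fun b hb => ?_) ?_
    · have := Finset.card_filter_add_card_filter_not (s := M) (fun p => l p = true)
      omega
    · rw [← card_colSet, ← card_colSet]
      exact (hT.2.2 b).trans (not_lt.1 hb)
    · rintro ⟨a, b⟩ hpT hpM hb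
      have hno : ¬ I.AcceptsA M l a b false := fun h =>
        hs a b false (hT.1 hpT) hpM ⟨h, Or.inl hb⟩
      rw [← card_rowSet, ← card_rowSet]
      refine ⟨(hT.2.1 a).trans (not_lt.1 fun h => hno (Or.inl h)), ?_⟩
      rintro ⟨a', b'⟩ hq rfl
      refine Finset.mem_filter.2 ⟨hq, fun hl => hno (Or.inr ⟨b', by simpa [rowSet] using hq, ?_⟩)⟩
      simp [keyA, Prod.Lex.toLex_lt_toLex, hl]
  · rw [← card_rowSet, ← card_rowSet]
    exact (hT.2.1 a).trans (not_lt.1 ha)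
  · rintro ⟨a, b⟩ hpT hpM ha
    have hno : ¬ I.AcceptsB M l a b true := fun h =>
      hs a b true (hT.1 hpT) hpM ⟨Or.inl ha, h⟩
    rw [← card_colSet, ← card_colSet]
    refine ⟨(hT.2.2 b).trans (not_lt.1 fun h => hno (Or.inl h)), ?_⟩
    rintro ⟨a', b'⟩ hq rfl
    refine Finset.mem_filter.2 ⟨hq, ?_⟩
    by_contra hl
    refine hno (Or.inr ⟨a', by simpa [colSet] using hq, ?_⟩)
    simp [keyB, Prod.Lex.toLex_lt_toLex, hl]

end PrefInstance

/-- Every instance `G` admits a popular matching `M₀` such that every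
popular matching of `G` has size at most `|M₀|`, `Δ(M₀,T) > 0` for every matching `T`
with `|T| > |M₀|` (so every weakly popular matching also has size at most `|M₀|`), and
`|M₀| ≥ (2/3)·|M_max|` for a maximum-size matching `M_max` of `G`. -/
theorem statement11 {α β : Type*} [Fintype α] [Fintype β] [DecidableEq α] [DecidableEq β]
    (I : PrefInstance α β)
    (Mmax : Finset (α × β)) (hMmax : I.IsMatching Mmax)
    (hmax : ∀ T, I.IsMatching T → T.card ≤ Mmax.card) :
    ∃ M₀ : Finset (α × β), I.Popular M₀ ∧
      (∀ T : Finset (α × β), I.Popular T → T.card ≤ M₀.card) ∧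
      (∀ T : Finset (α × β), I.IsMatching T → M₀.card < T.card → 0 < I.Delta M₀ T) ∧
      (∀ T : Finset (α × β), I.WeaklyPopular T → T.card ≤ M₀.card) ∧
      2 * Mmax.card ≤ 3 * M₀.card := by
  obtain ⟨M, l, hM, hs⟩ := I.exists_twoLevelStable
  have hpos : ∀ T, I.IsMatching T → M.card < T.card → 0 < I.Delta M T := fun T hT hlt => by
    have := (le_max_right _ _).trans (I.le_Delta hM hs hT)
    omega
  refine ⟨M, ⟨hM, fun T hT => (le_max_left _ _).trans (I.le_Delta hM hs hT)⟩, ?_, hpos, ?_,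
    I.two_mul_card_le hs hMmax⟩
  · intro T hT
    by_contra hlt
    have h1 := hpos T hT.1 (not_le.1 hlt)
    have h2 := hT.2 M hM
    have h3 := I.Delta_add_le M T
    omega
  · intro T hT
    by_contra hlt
    exact absurd (hpos T hT.1 (not_le.1 hlt)) (not_lt.2 (hT.2 M hM))
end
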